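/- arXiv:0805.4269 — 2 statements merged into one kernel-verified Lean document; each statement's English description precedes it below -/
import Mathlib

section
/- Let $(W,S)$ be a Coxeter system with $S$ finite and $G$ a group of automorphisms of $W$ stabilizing $S$. For a $G$-orbit $\omega \subseteq S$ with $W_\omega = \langle \omega \rangle$ finite, let $s_\omega$ be the longest element of $W_\omega$, and let $S_G$ be the set of all such $s_\omega$. Then the fixed-point subgroup $W^G$ is generated by $S_G$, and $(W^G, S_G)$ is a Coxeter system. -/
noncomputable section

section Cox
variable (B W : Type) [Group W] (M : CoxeterMatrix B) (cs : CoxeterSystem M W)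
  (G : Type) [Group G] [MulDistribMulAction G W]

/-- The subgroup `W^G` of `G`-fixed points of `W`. -/
def fixedSubgroup : Subgroup W where
  carrier := {w | ∀ σ : G, σ • w = w}
  mul_mem' := by intro a b ha hb; intro σ; rw [smul_mul', ha, hb]
  one_mem' := by intro σ; exact smul_one σ
  inv_mem' := by intro a ha; intro σ; rw [smul_inv', ha]

/-- The standard parabolic subgroup `W_ω` generated by the simple reflections in the
`G`-orbit `ω` of `i`. -/
def parab [MulAction G B] (i : B) : Subgroup W :=
  Subgroup.closure (cs.simple '' MulAction.orbit G i)

/-- The set `S_G` of longest elements `s_ω` of the finite standard parabolic subgroups `W_ω`,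
`ω` running over the `G`-orbits in `S`. -/
def SGset [MulAction G B] : Set W :=
  {w | ∃ i : B, w ∈ parab B W M cs G i ∧ ((parab B W M cs G i : Set W)).Finite ∧
    ∀ u ∈ parab B W M cs G i, cs.length u ≤ cs.length w}
end Cox


namespace CoxFix

section Exchange
open CoxeterSystem List
open scoped Classical

variable {B W : Type} [Group W] {M : CoxeterMatrix B} (cs : CoxeterSystem M W)

/-- the signed reflection permutation attached to a simple reflection. -/
def refl (i : B) : Equiv.Perm (W × ZMod 2) :=
  Function.Involutive.toPerm
    (fun p => (cs.simple i * p.1 * cs.simple i, p.2 + if p.1 = cs.simple i then 1 else 0)) (by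
      rintro ⟨t, e⟩
      have h : cs.simple i * t * cs.simple i = cs.simple i ↔ t = cs.simple i := by
        constructor
        · intro h
          have h2 : cs.simple i * (cs.simple i * t * cs.simple i) * cs.simple i
              = cs.simple i * cs.simple i * cs.simple i := by rw [h]
          simpa [mul_assoc] using h2
        · rintro rfl; simp
      simp only [h, Prod.mk.injEq]
      refine ⟨by simp [mul_assoc], ?_⟩
      split_ifs
      · rw [add_assoc, show (1 : ZMod 2) + 1 = 0 by decide, add_zero]
      · simp)

theorem refl_apply (i : B) (t : W) (e : ZMod 2) : refl cs i (t, e) =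
    (cs.simple i * t * cs.simple i, e + if t = cs.simple i then 1 else 0) := rfl

theorem refl_mul_self (i : B) : refl cs i * refl cs i = 1 := by
  ext1 p
  exact (Function.Involutive.toPerm_involutive _) p

theorem refl_word (ω : List B) (t : W) (e : ZMod 2) :
    (ω.map (refl cs)).prod (t, e) =
      (cs.wordProd ω * t * (cs.wordProd ω)⁻¹, e + ((cs.rightInvSeq ω).count t : ZMod 2)) := by
  induction ω with
  | nil => simp
  | cons i ω ih =>
    rw [List.map_cons, List.prod_cons, Equiv.Perm.mul_apply, ih, refl_apply, wordProd_cons,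
      rightInvSeq, List.count_cons]
    have h : cs.wordProd ω * t * (cs.wordProd ω)⁻¹ = cs.simple i ↔
      (cs.wordProd ω)⁻¹ * cs.simple i * cs.wordProd ω = t := by
      constructor
      · intro h; rw [← h]; group
      · rintro rfl; group
    simp only [h, Prod.mk.injEq, beq_iff_eq]
    refine ⟨by simp [mul_assoc], ?_⟩
    split_ifs <;> push_cast <;> ring

theorem lis_alt (i j : B) (t : W) : Even ((cs.leftInvSeq (alternatingWord i j (2 * M i j))).count t) := by
  set l := cs.leftInvSeq (alternatingWord i j (2 * M i j)) with hl
  have hlen : l.length = 2 * M i j := by simp [hl]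
  have h : l.drop (M i j) = l.take (M i j) := by
    apply List.ext_getElem
    · simp [hlen]; omega
    · intro n h1 h2
      simp only [List.length_drop, hlen, List.length_take] at h1 h2
      rw [List.getElem_drop, List.getElem_take]
      simp only [hl]
      rw [getElem_leftInvSeq_alternatingWord _ _ _ _ _ (by omega),
        getElem_leftInvSeq_alternatingWord _ _ _ _ _ (by omega),
        prod_alternatingWord_eq_mul_pow, prod_alternatingWord_eq_mul_pow]
      have e1 : (2 * (M i j + n) + 1) / 2 = M i j + n := by omega
      have e2 : (2 * n + 1) / 2 = n := by omega
      rw [e1, e2, pow_add, simple_mul_simple_pow', one_mul]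
      simp
  rw [← List.take_append_drop (M i j) l, List.count_append, h]
  exact ⟨_, rfl⟩

theorem refl_alt (i j : B) (m : ℕ) :
    ((alternatingWord i j (2 * m)).map (refl cs)).prod = (refl cs i * refl cs j) ^ m := by
  induction m with
  | zero => simp [alternatingWord]
  | succ m ih =>
    rw [show 2 * (m + 1) = 2 * m + 1 + 1 by ring, alternatingWord_succ, alternatingWord_succ, pow_succ,
      ← ih]
    simp

theorem refl_reverse (ω : List B) :
    ((ω.reverse).map (refl cs)).prod = ((ω.map (refl cs)).prod)⁻¹ := by
  induction ω with
  | nil => simp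
  | cons i ω ih =>
    have : (refl cs i)⁻¹ = refl cs i := inv_eq_of_mul_eq_one_left (refl_mul_self cs i)
    rw [List.reverse_cons, List.map_append, List.prod_append, ih, List.map_cons, List.prod_cons,
      List.map_cons, List.prod_cons, mul_inv_rev, this]
    simp

theorem refl_liftable : M.IsLiftable (refl cs) := by
  intro i j
  rw [← refl_alt, ← inv_eq_one, ← refl_reverse]
  ext1 ⟨t, e⟩
  rw [refl_word, rightInvSeq_reverse, List.count_reverse, (ZMod.natCast_eq_zero_iff_even).2 (lis_alt cs i j t)]
  have : cs.wordProd (alternatingWord i j (2 * M i j)) = 1 := by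
    rw [prod_alternatingWord_eq_mul_pow]; simp
  simp [this]

theorem count_congr {ω ω' : List B} (h : cs.wordProd ω = cs.wordProd ω') (t : W) :
    ((cs.rightInvSeq ω).count t : ZMod 2) = ((cs.rightInvSeq ω').count t : ZMod 2) := by
  have key : ∀ ω : List B, (ω.map (refl cs)).prod = cs.lift ⟨_, refl_liftable cs⟩ (cs.wordProd ω) := by
    intro ω
    rw [wordProd, map_list_prod, List.map_map]
    congr 1
    apply List.map_congr_left
    intro i _
    simp
  have h1 := refl_word cs ω t 0
  have h2 := refl_word cs ω' t 0
  rw [key, h, ← key, h2] at h1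
  simpa using (congrArg Prod.snd h1).symm

theorem count_concat (ω : List B) (i : B) :
    (cs.rightInvSeq (ω.concat i)).count (cs.simple i) = (cs.rightInvSeq ω).count (cs.simple i) + 1 := by
  rw [rightInvSeq_concat, List.concat_eq_append, List.count_append]
  have h := List.count_map_of_injective (cs.rightInvSeq ω) _ (MulAut.conj (cs.simple i)).injective
    (cs.simple i)
  have h2 : MulAut.conj (cs.simple i) (cs.simple i) = cs.simple i := by simp
  rw [h2] at h
  rw [h]
  simp

theorem exchange_of_mem {ω : List B} {t : W} (h : t ∈ cs.rightInvSeq ω) :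
    ∃ j < ω.length, cs.wordProd ω * t = cs.wordProd (ω.eraseIdx j) := by
  obtain ⟨j, hj, rfl⟩ := List.mem_iff_getElem.1 h
  refine ⟨j, by simpa using hj, ?_⟩
  rw [← wordProd_mul_getD_rightInvSeq, List.getD_eq_getElem _ _ hj]

theorem mem_ris_of_descent {ω : List B} {i : B} (h : cs.IsRightDescent (cs.wordProd ω) i) :
    cs.simple i ∈ cs.rightInvSeq ω := by
  by_contra hn
  have h0 : (cs.rightInvSeq ω).count (cs.simple i) = 0 := List.count_eq_zero.2 hn
  obtain ⟨τ, hτ, hw⟩ := cs.exists_isReduced (cs.wordProd ω * cs.simple i)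
  have h1 : cs.wordProd (ω.concat i) = cs.wordProd τ := by rw [wordProd_concat, hw]
  have h2 := count_congr cs h1 (cs.simple i)
  rw [count_concat, h0] at h2
  have h3 : cs.simple i ∈ cs.rightInvSeq τ := by
    by_contra h4
    rw [List.count_eq_zero.2 h4] at h2
    simp at h2
  obtain ⟨j, hj, he⟩ := exchange_of_mem cs h3
  have h5 := cs.length_wordProd_le (τ.eraseIdx j)
  rw [← he, ← hw, simple_mul_simple_cancel_right, List.length_eraseIdx_of_lt hj] at h5
  have h6 : cs.length (cs.wordProd ω * cs.simple i) = τ.length := by rw [hw]; exact hτ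
  unfold IsRightDescent at h
  omega

theorem exchange {ω : List B} {i : B} (h : cs.IsRightDescent (cs.wordProd ω) i) :
    ∃ j < ω.length, cs.wordProd ω * cs.simple i = cs.wordProd (ω.eraseIdx j) :=
  exchange_of_mem cs (mem_ris_of_descent cs h)

/-- Exchange for a factorization. -/
theorem exchange_mul {x y : W} {i : B} (hxy : cs.length (x * y) = cs.length x + cs.length y)
    (h : cs.IsRightDescent (x * y) i) :
    cs.IsRightDescent y i ∨ ∃ x', cs.length x' < cs.length x ∧ x * y * cs.simple i = x' * y := by
  obtain ⟨α, hα, rfl⟩ := cs.exists_isReduced x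
  obtain ⟨β, hβ, rfl⟩ := cs.exists_isReduced y
  rw [← wordProd_append] at h
  obtain ⟨j, hj, he⟩ := exchange cs h
  rw [wordProd_append] at he
  rw [hα.eq]
  by_cases hc : j < α.length
  · right
    refine ⟨cs.wordProd (α.eraseIdx j), ?_, ?_⟩
    · have := cs.length_wordProd_le (α.eraseIdx j)
      rw [List.length_eraseIdx_of_lt hc] at this
      omega
    · rw [he, List.eraseIdx_append_of_lt_length hc, wordProd_append]
  · left
    rw [List.eraseIdx_append_of_length_le (by omega), wordProd_append, mul_assoc, mul_right_inj] at he
    have hj' : j - α.length < β.length := by simp at hj; omega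
    have := cs.length_wordProd_le (β.eraseIdx (j - α.length))
    rw [List.length_eraseIdx_of_lt hj', ← he] at this
    unfold IsRightDescent
    rw [hβ.eq]
    omega

end Exchange

section Parabolic
open CoxeterSystem List

variable {B W : Type} [Group W] {M : CoxeterMatrix B} (cs : CoxeterSystem M W)

/-- Standard parabolic subgroup. -/
def Par (J : Set B) : Subgroup W := Subgroup.closure (cs.simple '' J)

theorem simple_mem_par {J : Set B} {i : B} (hi : i ∈ J) : cs.simple i ∈ Par cs J :=
  Subgroup.subset_closure ⟨i, hi, rfl⟩

theorem par_word {J : Set B} {x : W} (hx : x ∈ Par cs J) :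
    ∃ ω : List B, (∀ i ∈ ω, i ∈ J) ∧ cs.IsReduced ω ∧ x = cs.wordProd ω := by
  have step : ∀ x : W, ∀ i ∈ J,
      (∃ ω : List B, (∀ i ∈ ω, i ∈ J) ∧ cs.IsReduced ω ∧ x = cs.wordProd ω) →
      (∃ ω : List B, (∀ i ∈ ω, i ∈ J) ∧ cs.IsReduced ω ∧ x * cs.simple i = cs.wordProd ω) := by
    rintro x i hi ⟨ω, hJ, hr, rfl⟩
    by_cases hd : cs.IsRightDescent (cs.wordProd ω) i
    · obtain ⟨j, hj, he⟩ := exchange cs hd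
      refine ⟨ω.eraseIdx j, fun k hk => hJ k (List.mem_of_mem_eraseIdx hk), ?_, he⟩
      unfold CoxeterSystem.IsReduced
      rw [← he, List.length_eraseIdx_of_lt hj]
      have := cs.isRightDescent_iff.1 hd
      rw [hr.eq] at this
      omega
    · refine ⟨ω.concat i, ?_, ?_, by rw [wordProd_concat]⟩
      · intro k hk
        simp at hk
        rcases hk with hk | rfl
        · exact hJ k hk
        · exact hi
      · unfold CoxeterSystem.IsReduced
        rw [wordProd_concat, cs.not_isRightDescent_iff.1 hd, hr.eq]
        simp
  unfold Par at hx
  induction hx using Subgroup.closure_induction_right with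
  | one => exact ⟨[], by simp, by simp [CoxeterSystem.IsReduced], by simp⟩
  | mul_right x hx y hy ih =>
    obtain ⟨i, hi, rfl⟩ := hy
    exact step x i hi ih
  | mul_inv_cancel x hx y hy ih =>
    obtain ⟨i, hi, rfl⟩ := hy
    rw [inv_simple]
    exact step x i hi ih

theorem par_of_word {J : Set B} {ω : List B} (h : ∀ i ∈ ω, i ∈ J) : cs.wordProd ω ∈ Par cs J := by
  apply Subgroup.list_prod_mem
  intro x hx
  obtain ⟨i, hi, rfl⟩ := List.mem_map.1 hx
  exact simple_mem_par cs (h i hi)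

theorem par_induction {J : Set B} {p : W → Prop} (one : p 1)
    (step : ∀ x ∈ Par cs J, ∀ i ∈ J, ¬ cs.IsRightDescent x i → p x → p (x * cs.simple i)) {x : W}
    (hx : x ∈ Par cs J) : p x := by
  obtain ⟨ω, hJ, hr, rfl⟩ := par_word cs hx
  clear hx
  induction ω using List.reverseRecOn with
  | nil => simpa using one
  | append_singleton ω i ih =>
    have hr' : cs.IsReduced ω := by simpa using hr.take ω.length
    have hJ' : ∀ i ∈ ω, i ∈ J := fun k hk => hJ k (by simp [hk])
    rw [wordProd_append, wordProd_singleton]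
    refine step _ (par_of_word cs hJ') i (hJ i (by simp)) ?_ (ih hJ' hr')
    rw [not_isRightDescent_iff]
    have := hr.eq
    rw [wordProd_append, wordProd_singleton] at this
    rw [this, hr'.eq]
    simp

theorem par_exists_descent {J : Set B} {x : W} (hx : x ∈ Par cs J) :
    x = 1 ∨ ∃ i ∈ J, cs.IsRightDescent x i := by
  refine par_induction cs (p := fun x => x = 1 ∨ ∃ i ∈ J, cs.IsRightDescent x i) (Or.inl rfl) ?_ hx
  intro x _ i hi hd _
  right
  refine ⟨i, hi, ?_⟩
  rw [isRightDescent_iff_not_isRightDescent_mul]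
  simpa using hd

theorem par_add_of_min {J : Set B} {v : W} (hv : ∀ y ∈ Par cs J, cs.length v ≤ cs.length (v * y))
    {x : W} (hx : x ∈ Par cs J) : cs.length (v * x) = cs.length v + cs.length x := by
  refine par_induction cs (p := fun x => cs.length (v * x) = cs.length v + cs.length x) (by simp) ?_ hx
  intro x hx i hi hd ih
  rw [cs.not_isRightDescent_iff.1 hd, ← mul_assoc]
  by_cases h : cs.IsRightDescent (v * x) i
  · exfalso
    rcases exchange_mul cs ih h with h1 | ⟨v', h1, h2⟩
    · exact hd h1
    · have h3 : v' = v * (x * cs.simple i * x⁻¹) := by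
        rw [← mul_inv_eq_iff_eq_mul] at h2
        rw [← h2]; group
      have h4 := hv (x * cs.simple i * x⁻¹)
        ((Par cs J).mul_mem ((Par cs J).mul_mem hx (simple_mem_par cs hi)) ((Par cs J).inv_mem hx))
      rw [← h3] at h4
      omega
  · rw [cs.not_isRightDescent_iff.1 h, ih]; ring

theorem par_add {J : Set B} {v : W} (hv : ∀ i ∈ J, ¬ cs.IsRightDescent v i)
    {x : W} (hx : x ∈ Par cs J) : cs.length (v * x) = cs.length v + cs.length x := by
  apply par_add_of_min cs _ hx
  obtain ⟨y, hy, hmin⟩ : ∃ y ∈ Par cs J, ∀ z ∈ Par cs J, cs.length (v * y) ≤ cs.length (v * z) := by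
    obtain ⟨y, hy⟩ := exists_minimalFor_of_wellFoundedLT (fun y => y ∈ Par cs J)
      (fun y => cs.length (v * y)) ⟨1, (Par cs J).one_mem⟩
    refine ⟨y, hy.1, fun z hz => ?_⟩
    by_contra hc
    exact hc (hy.2 hz (by simp only; omega))
  have hadd : ∀ z ∈ Par cs J, cs.length (v * y * z) = cs.length (v * y) + cs.length z := by
    intro z hz
    apply par_add_of_min cs _ hz
    intro w hw
    rw [mul_assoc]
    exact hmin _ ((Par cs J).mul_mem hy hw)
  have hy1 : y = 1 := by
    rcases par_exists_descent cs ((Par cs J).inv_mem hy) with h | ⟨i, hi, hd⟩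
    · simpa using h
    · exfalso
      apply hv i hi
      have h1 := hadd y⁻¹ ((Par cs J).inv_mem hy)
      have h2 := hadd (y⁻¹ * cs.simple i) ((Par cs J).mul_mem ((Par cs J).inv_mem hy) (simple_mem_par cs hi))
      unfold CoxeterSystem.IsRightDescent at hd ⊢
      have e1 : v * y * y⁻¹ = v := by group
      have e2 : v * y * (y⁻¹ * cs.simple i) = v * cs.simple i := by group
      rw [e1] at h1
      rw [e2] at h2
      omega
  intro z hz
  have := hmin z hz
  rwa [hy1, mul_one] at this

theorem par_sub {J : Set B} {w : W} (hw : ∀ i ∈ J, cs.IsRightDescent w i)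
    {y : W} (hy : y ∈ Par cs J) : cs.length (w * y) + cs.length y = cs.length w := by
  suffices h : ∀ y ∈ Par cs J, ∃ x, w = x * y ∧ cs.length (x * y) = cs.length x + cs.length y by
    obtain ⟨x, h1, h2⟩ := h y⁻¹ ((Par cs J).inv_mem hy)
    rw [← h1, length_inv] at h2
    have : x = w * y := by rw [h1]; group
    rw [← this, h2]
  intro y hy
  refine par_induction cs (p := fun y => ∃ x, w = x * y ∧
    cs.length (x * y) = cs.length x + cs.length y) ⟨w, by simp⟩ ?_ hy
  rintro y hy i hi hd ⟨x, h1, h2⟩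
  have hwi := hw i hi
  have hwi' := hw i hi
  rw [h1] at hwi
  rcases exchange_mul cs h2 hwi with h | ⟨x', h3, h4⟩
  · exact absurd h hd
  · have h5 : w = x' * (y * cs.simple i) := by
      rw [← mul_assoc, ← h4, ← h1]; simp
    refine ⟨x', h5, ?_⟩
    have h6 := cs.length_mul_le x' (y * cs.simple i)
    rw [← h5] at h6 ⊢
    rw [cs.not_isRightDescent_iff.1 hd] at h6 ⊢
    rw [← h1] at h2
    omega

theorem par_longest_unique {J : Set B} {x y : W} (hx : x ∈ Par cs J) (hy : y ∈ Par cs J)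
    (hdx : ∀ i ∈ J, cs.IsRightDescent x i) (hdy : ∀ i ∈ J, cs.IsRightDescent y i) : x = y := by
  have h1 := par_sub cs hdx ((Par cs J).inv_mem hy)
  have h2 := par_sub cs hdy ((Par cs J).inv_mem hx)
  rw [length_inv] at h1 h2
  have h3 : cs.length (x * y⁻¹) = 0 := by omega
  rw [CoxeterSystem.length_eq_zero_iff] at h3
  exact mul_inv_eq_one.1 h3

theorem par_finite {J : Set B} {w : W} (hw : ∀ i ∈ J, cs.IsRightDescent w i) :
    (Par cs J : Set W).Finite := by
  have hS : (cs.simple '' J).Finite := by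
    obtain ⟨ω, -, rfl⟩ := cs.exists_isReduced w
    refine (List.finite_toSet (cs.rightInvSeq ω)).subset ?_
    rintro _ ⟨i, hi, rfl⟩
    exact mem_ris_of_descent cs (hw i hi)
  have : Finite (cs.simple '' J) := hS
  have hL := List.finite_length_le (cs.simple '' J) (cs.length w)
  refine (hL.image (fun l : List (cs.simple '' J) => (l.map Subtype.val).prod)).subset ?_
  intro y hy
  have h1 := par_sub cs hw hy
  obtain ⟨ω, hJ, hr, rfl⟩ := par_word cs hy
  refine ⟨ω.attach.map (fun i => ⟨cs.simple i.1, i.1, hJ i.1 i.2, rfl⟩), ?_, ?_⟩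
  · simp only [Set.mem_ofPred_eq, List.length_map, List.length_attach]
    rw [hr.eq] at h1
    omega
  · simp only [List.map_map]
    rw [CoxeterSystem.wordProd]
    congr 1
    conv_rhs => rw [← List.attach_map_subtype_val ω]
    rw [List.map_map]
    rfl

end Parabolic

section Abstract
open CoxeterSystem

variable {H ι : Type} [Group H] (s : ι → H) (L : H → ℕ)

/-- alternating products -/
def alt : ι → ι → ℕ → H
  | _, _, 0 => 1
  | t, r, k + 1 => alt r t k * s r

/-- total weight of an alternating product -/
def wt : ι → ι → ℕ → ℕ
  | _, _, 0 => 0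
  | t, r, k + 1 => wt r t k + L (s r)

theorem wt_lt (hpos : ∀ t, 0 < L (s t)) (k : ℕ) (t r : ι) : wt s L t r k < wt s L t r (k + 1) := by
  induction k generalizing t r with
  | zero => simp [wt, hpos]
  | succ k ih =>
    have := ih r t
    rw [wt, wt]
    omega

theorem alt_mem (k : ℕ) (t r : ι) : alt s t r k ∈ Subgroup.closure {s t, s r} := by
  induction k generalizing t r with
  | zero => exact Subgroup.one_mem _
  | succ k ih =>
    have := ih r t
    rw [Set.pair_comm] at this
    exact Subgroup.mul_mem _ this (Subgroup.subset_closure (by simp))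

theorem alt_pow (h2 : ∀ t, s t * s t = 1) (k : ℕ) (t r : ι) :
    alt s t r k * (s r * s t) ^ k = alt s r t k := by
  induction k generalizing t r with
  | zero => simp [alt]
  | succ k ih =>
    have e : s t * (s r * s t) ^ k = (s t * s r) ^ k * s t :=
      SemiconjBy.pow_right (by simp [SemiconjBy, mul_assoc]) k
    calc alt s t r (k + 1) * (s r * s t) ^ (k + 1)
        = alt s r t k * (s r * s r) * (s t * (s r * s t) ^ k) := by
          rw [alt, pow_succ']; simp only [mul_assoc]
      _ = alt s r t k * (s t * s r) ^ k * s t := by rw [h2, e]; simp only [mul_assoc, mul_one]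
      _ = alt s r t (k + 1) := by rw [ih]; rfl

theorem dihedral (h1 : ∀ w, L w = 0 ↔ w = 1) (h2 : ∀ t, s t * s t = 1) (hpos : ∀ t, 0 < L (s t))
    (hasc : ∀ w t r, ¬ L (w * s t) < L w → ¬ L (w * s r) < L w →
      ∀ y ∈ Subgroup.closure {s t, s r}, L (w * y) = L w + L y)
    (hdesc : ∀ w t r, L (w * s t) < L w → L (w * s r) < L w →
      ∀ y ∈ Subgroup.closure {s t, s r}, L (w * y) + L y = L w)
    (k : ℕ) (t r : ι) (hk : orderOf (s t * s r) = 0 ∨ k < orderOf (s t * s r)) :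
    ¬ L (alt s t r k * s t) < L (alt s t r k) := by
  induction k using Nat.strong_induction_on generalizing t r with
  | _ k ih =>
  have hcomm : orderOf (s r * s t) = orderOf (s t * s r) := by
    have : s r * s t = (s t * s r)⁻¹ := by
      rw [mul_inv_rev, inv_eq_of_mul_eq_one_left (h2 t), inv_eq_of_mul_eq_one_left (h2 r)]
    rw [this, orderOf_inv]
  have hA : ∀ k' < k, ¬ L (alt s t r k' * s t) < L (alt s t r k') := fun k' hk' =>
    ih k' hk' t r (by omega)
  have hB : ∀ k' < k, ¬ L (alt s r t k' * s r) < L (alt s r t k') := fun k' hk' =>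
    ih k' hk' r t (by rw [hcomm]; omega)
  have hwt : ∀ j, ∀ t r, (∀ k' < j, ¬ L (alt s t r k' * s t) < L (alt s t r k')) →
      (∀ k' < j, ¬ L (alt s r t k' * s r) < L (alt s r t k')) → L (alt s t r j) = wt s L t r j := by
    intro j
    induction j with
    | zero => intro t r _ _; simp [alt, wt, h1]
    | succ j ihj =>
      intro t r ha hb
      have := hasc _ r r (hb j (by omega)) (hb j (by omega)) (s r) (Subgroup.subset_closure (by simp))
      rw [alt, wt, this, ihj r t (fun k' h => hb k' (by omega)) (fun k' h => ha k' (by omega))]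
  have hW : L (alt s t r k) = wt s L t r k := hwt k t r hA hB
  have hY : L (alt s r t k) = wt s L r t k := hwt k r t hB hA
  intro hD
  rcases k with _ | k
  · simp [alt, (h1 1).2 rfl] at hD
  set w := alt s t r (k + 1) with hw
  set y := alt s r t (k + 1) with hy
  have hY' : L (alt s t r k) = wt s L t r k :=
    hwt k t r (fun j h => hA j (by omega)) (fun j h => hB j (by omega))
  have hX' : L (alt s r t k) = wt s L r t k :=
    hwt k r t (fun j h => hB j (by omega)) (fun j h => hA j (by omega))
  have hDr : L (w * s r) < L w := by
    have : w * s r = alt s r t k := by rw [hw, alt, mul_assoc, h2, mul_one]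
    rw [this, hX', hW, wt]
    have := hpos r
    omega
  have hlong := hdesc w t r hD hDr
  have hymem : y ∈ Subgroup.closure {s t, s r} := by
    have := alt_mem s (k + 1) r t
    rwa [Set.pair_comm] at this
  have hwmem : w ∈ Subgroup.closure {s t, s r} := alt_mem s (k + 1) t r
  have hww : w * w = 1 := by
    rw [← h1]
    have := hlong w hwmem
    omega
  have hLz := hlong y hymem
  have hz1 : ¬ L (w * y * s t) < L (w * y) := by
    have e : w * y * s t = w * alt s t r k := by
      rw [hy, alt, mul_assoc, mul_assoc, h2, mul_one]
    have := hlong _ (alt_mem s k t r)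
    rw [e]
    rw [hY, wt] at hLz
    omega
  have hz2 : ¬ L (w * y * s r) < L (w * y) := by
    intro h
    have h3 := hdesc _ r r h h (s r) (Subgroup.subset_closure (by simp))
    have h4 := wt_lt s L hpos k r t
    have h5 : L w = wt s L r t k + L (s r) := hW
    omega
  have hz : w * y = 1 := by
    have hm : w * y ∈ Subgroup.closure {s t, s r} := Subgroup.mul_mem _ hwmem hymem
    have h3 := hasc _ t r hz1 hz2 _ (Subgroup.inv_mem _ hm)
    rw [mul_inv_cancel, (h1 1).2 rfl] at h3
    rw [← h1]
    omega
  have hwy : w = y := by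
    have : w * w = w * y := by rw [hww, hz]
    exact mul_left_cancel this
  have hp := alt_pow s h2 (k + 1) t r
  rw [← hw, ← hy, ← hwy, mul_eq_left] at hp
  have hdvd := orderOf_dvd_of_pow_eq_one hp
  rw [hcomm] at hdvd
  rcases hk with hk | hk
  · rw [hk] at hdvd
    simp at hdvd
  · have := Nat.le_of_dvd (by omega) hdvd
    omega

theorem strip {M : CoxeterMatrix ι} {W : Type} [Group W] (cs : CoxeterSystem M W) (n : ℕ) :
    ∀ (w : W) (t r : ι), cs.length w = n → ¬ cs.IsRightDescent w t →
    ∃ v k, w = v * cs.wordProd (alternatingWord t r k) ∧ cs.length w = cs.length v + k ∧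
      ¬ cs.IsRightDescent v t ∧ ¬ cs.IsRightDescent v r := by
  induction n with
  | zero =>
    intro w t r hn ht
    refine ⟨w, 0, by simp [alternatingWord], by simp, ht, ?_⟩
    unfold CoxeterSystem.IsRightDescent
    omega
  | succ n ih =>
    intro w t r hn ht
    by_cases hr : cs.IsRightDescent w r
    · have h1 := cs.isRightDescent_iff.1 hr
      obtain ⟨v, k, h2, h3, h4, h5⟩ := ih (w * cs.simple r) r t (by omega)
        (cs.isRightDescent_iff_not_isRightDescent_mul.1 hr)
      refine ⟨v, k + 1, ?_, by omega, h5, h4⟩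
      rw [alternatingWord_succ, wordProd_concat, ← mul_assoc, ← h2]
      simp
    · exact ⟨w, 0, by simp [alternatingWord], by simp, ht, hr⟩

theorem abstract_coxeter (hinj : Function.Injective s)
    (h1 : ∀ w, L w = 0 ↔ w = 1) (h2 : ∀ t, s t * s t = 1) (hne : ∀ t, s t ≠ 1)
    (hgen : Subgroup.closure (Set.range s) = ⊤)
    (hasc : ∀ w t r, ¬ L (w * s t) < L w → ¬ L (w * s r) < L w →
      ∀ y ∈ Subgroup.closure {s t, s r}, L (w * y) = L w + L y)
    (hdesc : ∀ w t r, L (w * s t) < L w → L (w * s r) < L w →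
      ∀ y ∈ Subgroup.closure {s t, s r}, L (w * y) + L y = L w) :
    ∃ (M' : CoxeterMatrix ι) (cs' : CoxeterSystem M' H), ∀ t, cs'.simple t = s t := by
  have hpos : ∀ t, 0 < L (s t) := fun t => Nat.pos_of_ne_zero (fun h => hne t ((h1 _).1 h))
  have hsinv : ∀ t, (s t)⁻¹ = s t := fun t => inv_eq_of_mul_eq_one_left (h2 t)
  let M' : CoxeterMatrix ι :=
    { M := Matrix.of fun t r => orderOf (s t * s r)
      isSymm := by
        ext t r
        simp only [Matrix.transpose_apply, Matrix.of_apply]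
        rw [← orderOf_inv, mul_inv_rev, hsinv, hsinv]
      diagonal := by intro t; simp [h2]
      off_diagonal := by
        intro t r htr h
        simp only [Matrix.of_apply, orderOf_eq_one_iff] at h
        apply htr
        apply hinj
        rw [← hsinv r]
        exact eq_inv_of_mul_eq_one_left h }
  have hM : ∀ t r, M' t r = orderOf (s t * s r) := fun _ _ => rfl
  have hlift : M'.IsLiftable s := fun t r => by rw [hM]; exact pow_orderOf_eq_one _
  let C := M'.toCoxeterSystem
  let φ : M'.Group →* H := C.lift ⟨s, hlift⟩
  have hφ : ∀ t, φ (C.simple t) = s t := fun t => C.lift_apply_simple hlift t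
  have hφalt : ∀ k t r, φ (C.wordProd (alternatingWord t r k)) = alt s t r k := by
    intro k
    induction k with
    | zero => intro t r; simp [alternatingWord, alt]
    | succ k ih =>
      intro t r
      rw [alternatingWord_succ, wordProd_concat, map_mul, ih, hφ, alt]
  have main : ∀ n, ∀ w : M'.Group, C.length w = n → ∀ t, ¬ C.IsRightDescent w t →
      ¬ L (φ w * s t) < L (φ w) := by
    intro n
    induction n using Nat.strong_induction_on with
    | _ n ih =>
    intro w hn t ht
    by_cases hw1 : w = 1
    · subst hw1
      simp [(h1 1).2 rfl]
    obtain ⟨r, hr⟩ := C.exists_rightDescent_of_ne_one hw1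
    obtain ⟨v, k, hv, hlen, hvt, hvr⟩ := strip C n w t r hn ht
    have hk : k ≠ 0 := by
      rintro rfl
      simp [alternatingWord] at hv
      exact hvr (hv ▸ hr)
    have iht := ih (C.length v) (by omega) v rfl t hvt
    have ihr := ih (C.length v) (by omega) v rfl r hvr
    have hkm : orderOf (s t * s r) = 0 ∨ k < orderOf (s t * s r) := by
      by_contra! hc
      obtain ⟨hm0, hmk⟩ := hc
      rw [← hM] at hm0 hmk
      rcases hmk.eq_or_lt with he | hlt
      · apply ht
        obtain ⟨m, rfl⟩ := Nat.exists_eq_succ_of_ne_zero hk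
        have hb := C.wordProd_braidWord_eq t r
        unfold CoxeterSystem.braidWord at hb
        rw [M'.symmetric r t, he] at hb
        have : w * C.simple t = v * C.wordProd (alternatingWord t r m) := by
          rw [hv, hb, Nat.succ_eq_add_one, alternatingWord_succ, wordProd_concat]
          simp [mul_assoc]
        unfold CoxeterSystem.IsRightDescent
        rw [this, hlen]
        have h3 := C.length_mul_le v (C.wordProd (alternatingWord t r m))
        have h4 := C.length_wordProd_le (alternatingWord t r m)
        rw [length_alternatingWord] at h4
        omega
      · apply C.not_isReduced_alternatingWord t r hm0 hlt
        have h3 := C.length_mul_le v (C.wordProd (alternatingWord t r k))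
        have h4 := C.length_wordProd_le (alternatingWord t r k)
        rw [← hv] at h3
        unfold CoxeterSystem.IsReduced
        rw [length_alternatingWord] at h4 ⊢
        omega
    have hd := dihedral s L h1 h2 hpos hasc hdesc k t r hkm
    have hmem := alt_mem s k t r
    have e1 := hasc _ t r iht ihr _ hmem
    have e2 := hasc _ t r iht ihr _ (Subgroup.mul_mem _ hmem
      (Subgroup.subset_closure (show s t ∈ ({s t, s r} : Set H) by simp)))
    rw [hv, map_mul, hφalt, mul_assoc, e1, e2]
    omega
  have inj : Function.Injective φ := by
    rw [injective_iff_map_eq_one]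
    intro w hw
    by_contra hne1
    obtain ⟨r, hr⟩ := C.exists_rightDescent_of_ne_one hne1
    have h3 := main _ (w * C.simple r) rfl r (C.isRightDescent_iff_not_isRightDescent_mul.1 hr)
    rw [map_mul, hw, hφ, one_mul, h2, (h1 1).2 rfl] at h3
    exact h3 (hpos r)
  have surj : Function.Surjective φ := by
    rw [← MonoidHom.range_eq_top, eq_top_iff, ← hgen, Subgroup.closure_le]
    rintro _ ⟨t, rfl⟩
    exact ⟨C.simple t, hφ t⟩
  let e : M'.Group ≃* H := MulEquiv.ofBijective φ ⟨inj, surj⟩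
  exact ⟨M', C.map e, fun t => hφ t⟩

end Abstract

section Fixed
open CoxeterSystem

variable {B W : Type} [Group W] {M : CoxeterMatrix B} (cs : CoxeterSystem M W)
    {G : Type} [Group G] [MulDistribMulAction G W] [MulAction G B]

theorem length_smul_le (hact : ∀ (σ : G) (i : B), σ • cs.simple i = cs.simple (σ • i))
    (σ : G) (w : W) : cs.length (σ • w) ≤ cs.length w := by
  obtain ⟨ω, hr, rfl⟩ := cs.exists_isReduced w
  have : σ • cs.wordProd ω = cs.wordProd (ω.map (σ • ·)) := by
    clear hr
    induction ω with
    | nil => simp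
    | cons i ω ih => rw [wordProd_cons, smul_mul', ih, hact, List.map_cons, wordProd_cons]
  rw [this, hr.eq]
  exact (cs.length_wordProd_le _).trans (by simp)

theorem length_smul (hact : ∀ (σ : G) (i : B), σ • cs.simple i = cs.simple (σ • i))
    (σ : G) (w : W) : cs.length (σ • w) = cs.length w := by
  apply le_antisymm (length_smul_le cs hact σ w)
  have := length_smul_le cs hact σ⁻¹ (σ • w)
  rwa [inv_smul_smul] at this

theorem descent_orbit (hact : ∀ (σ : G) (i : B), σ • cs.simple i = cs.simple (σ • i))
    {w : W} (hw : w ∈ fixedSubgroup W G) {i j : B} (hj : j ∈ MulAction.orbit G i) :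
    cs.IsRightDescent w j ↔ cs.IsRightDescent w i := by
  obtain ⟨σ, rfl⟩ := hj
  unfold CoxeterSystem.IsRightDescent
  have : w * cs.simple (σ • i) = σ • (w * cs.simple i) := by
    rw [smul_mul', hact, hw σ]
  simp only
  rw [this, length_smul cs hact]

/-- `x` is a longest element of the parabolic subgroup of the orbit of `i`. -/
def IsLong (G : Type) [Group G] [MulAction G B] (i : B) (x : W) : Prop :=
  x ∈ Par cs (MulAction.orbit G i) ∧ ∀ u ∈ Par cs (MulAction.orbit G i), cs.length u ≤ cs.length x

variable {cs}

theorem IsLong.descent {i : B} {x : W} (h : IsLong cs G i x) :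
    ∀ j ∈ MulAction.orbit G i, cs.IsRightDescent x j := by
  intro j hj
  have h1 := h.2 _ (Subgroup.mul_mem _ h.1 (simple_mem_par cs hj))
  exact lt_of_le_of_ne h1 (cs.length_mul_simple_ne x j)

theorem IsLong.unique {i : B} {x y : W} (h : IsLong cs G i x) (h' : IsLong cs G i y) : x = y :=
  par_longest_unique cs h.1 h'.1 h.descent h'.descent

theorem IsLong.mul_self {i : B} {x : W} (h : IsLong cs G i x) : x * x = 1 := by
  have : x⁻¹ = x := IsLong.unique (G := G) (i := i)
    ⟨Subgroup.inv_mem _ h.1, fun u hu => by rw [cs.length_inv]; exact h.2 u hu⟩ h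
  nth_rw 1 [← this]
  simp

theorem IsLong.ne_one {i : B} {x : W} (h : IsLong cs G i x) : x ≠ 1 := by
  rintro rfl
  exact cs.not_isRightDescent_one i (h.descent i (MulAction.mem_orbit_self i))

theorem IsLong.pos {i : B} {x : W} (h : IsLong cs G i x) : 0 < cs.length x :=
  Nat.pos_of_ne_zero (fun h0 => h.ne_one (cs.length_eq_zero_iff.1 h0))

theorem IsLong.fixed (hact : ∀ (σ : G) (i : B), σ • cs.simple i = cs.simple (σ • i))
    {i : B} {x : W} (h : IsLong cs G i x) : x ∈ fixedSubgroup W G := by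
  intro σ
  refine IsLong.unique (G := G) (i := i) ⟨?_, fun u hu => by
    rw [length_smul cs hact]; exact h.2 u hu⟩ h
  have hle : Par cs (MulAction.orbit G i) ≤
      (Par cs (MulAction.orbit G i)).comap (MulDistribMulAction.toMonoidHom W σ) := by
    conv_lhs => unfold Par
    rw [Subgroup.closure_le]
    rintro _ ⟨j, hj, rfl⟩
    simp only [Subgroup.coe_comap, Set.mem_preimage, MulDistribMulAction.toMonoidHom_apply,
      SetLike.mem_coe]
    rw [hact]
    exact simple_mem_par cs (MulAction.mem_orbit_of_mem_orbit σ hj)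
  exact hle h.1

theorem IsLong.of_descent (hact : ∀ (σ : G) (i : B), σ • cs.simple i = cs.simple (σ • i))
    {i : B} {x : W} (h : IsLong cs G i x) {w : W} (hw : w ∈ fixedSubgroup W G)
    (hd : cs.IsRightDescent w i) : cs.length (w * x) + cs.length x = cs.length w :=
  par_sub cs (fun _ hj => (descent_orbit cs hact hw hj).2 hd) h.1

theorem IsLong.of_not_descent (hact : ∀ (σ : G) (i : B), σ • cs.simple i = cs.simple (σ • i))
    {i : B} {x : W} (h : IsLong cs G i x) {w : W} (hw : w ∈ fixedSubgroup W G)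
    (hd : ¬ cs.IsRightDescent w i) : cs.length (w * x) = cs.length w + cs.length x :=
  par_add cs (fun _ hj => (descent_orbit cs hact hw hj).not.2 hd) h.1

theorem IsLong.lt_iff (hact : ∀ (σ : G) (i : B), σ • cs.simple i = cs.simple (σ • i))
    {i : B} {x : W} (h : IsLong cs G i x) {w : W} (hw : w ∈ fixedSubgroup W G) :
    cs.length (w * x) < cs.length w ↔ cs.IsRightDescent w i := by
  have := h.pos
  constructor
  · intro hlt
    by_contra hd
    have := h.of_not_descent hact hw hd
    omega
  · intro hd
    have := h.of_descent hact hw hd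
    omega

theorem mem_SG_iff {x : W} : x ∈ SGset B W M cs G ↔
    ∃ i, IsLong cs G i x ∧ (Par cs (MulAction.orbit G i) : Set W).Finite :=
  ⟨fun ⟨i, h1, h2, h3⟩ => ⟨i, ⟨h1, h3⟩, h2⟩, fun ⟨i, ⟨h1, h3⟩, h2⟩ => ⟨i, h1, h2, h3⟩⟩

theorem exists_long {i : B} {w : W} (hd : ∀ j ∈ MulAction.orbit G i, cs.IsRightDescent w j) :
    ∃ x ∈ SGset B W M cs G, IsLong cs G i x := by
  have hfin := par_finite cs hd
  obtain ⟨x, hx, hmax⟩ := Set.exists_max_image _ cs.length hfin ⟨1, Subgroup.one_mem _⟩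
  exact ⟨x, mem_SG_iff.2 ⟨i, ⟨hx, hmax⟩, hfin⟩, hx, hmax⟩

theorem closure_SG (hact : ∀ (σ : G) (i : B), σ • cs.simple i = cs.simple (σ • i)) :
    Subgroup.closure (SGset B W M cs G) = fixedSubgroup W G := by
  apply le_antisymm
  · rw [Subgroup.closure_le]
    intro x hx
    obtain ⟨i, hi, -⟩ := mem_SG_iff.1 hx
    exact hi.fixed hact
  · have key : ∀ n, ∀ w ∈ fixedSubgroup W G, cs.length w = n →
        w ∈ Subgroup.closure (SGset B W M cs G) := by
      intro n
      induction n using Nat.strong_induction_on with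
      | _ n ih =>
      intro w hw hn
      by_cases hw1 : w = 1
      · rw [hw1]; exact Subgroup.one_mem _
      obtain ⟨i, hi⟩ := cs.exists_rightDescent_of_ne_one hw1
      obtain ⟨x, hx, hl⟩ := exists_long (cs := cs) (G := G) (i := i) (w := w)
        (fun j hj => (descent_orbit cs hact hw hj).2 hi)
      have h1 := (hl.lt_iff hact hw).2 hi
      have h2 := ih _ (hn ▸ h1) (w * x) (Subgroup.mul_mem _ hw (hl.fixed hact)) rfl
      have h3 : w = w * x * x := by rw [mul_assoc, hl.mul_self, mul_one]
      rw [h3]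
      exact Subgroup.mul_mem _ h2 (Subgroup.subset_closure hx)
    exact fun w hw => key _ w hw rfl

theorem mem_par_union {i j : B} {x x' : W} (h : IsLong cs G i x) (h' : IsLong cs G j x')
    {y : W} (hy : y ∈ Subgroup.closure {x, x'}) :
    y ∈ Par cs (MulAction.orbit G i ∪ MulAction.orbit G j) := by
  have hle : Subgroup.closure {x, x'} ≤ Par cs (MulAction.orbit G i ∪ MulAction.orbit G j) := by
    rw [Subgroup.closure_le]
    rintro z (rfl | rfl)
    · exact Subgroup.closure_mono (Set.image_mono Set.subset_union_left) h.1
    · exact Subgroup.closure_mono (Set.image_mono Set.subset_union_right) h'.1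
  exact hle hy

end Fixed

end CoxFix

/-!
STATEMENT 4 (Hée): Let `(W,S)` be a Coxeter system and `G` a group of automorphisms of `W`
stabilizing `S`.  With `S_G` the set of longest elements `s_ω` of the finite standard
parabolic subgroups `W_ω` attached to the `G`-orbits `ω ⊆ S`, the fixed subgroup `W^G`
is generated by `S_G` and `(W^G, S_G)` is a Coxeter system.
-/

theorem statement4 (B W : Type) [Group W] (M : CoxeterMatrix B) (cs : CoxeterSystem M W)
    (G : Type) [Group G] [MulDistribMulAction G W] [MulAction G B]
    (hact : ∀ (σ : G) (i : B), σ • cs.simple i = cs.simple (σ • i)) :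
    Subgroup.closure (SGset B W M cs G) = fixedSubgroup W G ∧
    ∃ (ι : Type) (M' : CoxeterMatrix ι) (cs' : CoxeterSystem M' (fixedSubgroup W G)),
      Set.range (fun i => (cs'.simple i : W)) = SGset B W M cs G := by
  refine ⟨CoxFix.closure_SG hact, ?_⟩
  have hlong : ∀ t : SGset B W M cs G, ∃ i, CoxFix.IsLong cs G i t.1 := fun t => by
    obtain ⟨i, hi, -⟩ := CoxFix.mem_SG_iff.1 t.2
    exact ⟨i, hi⟩
  choose a ha using hlong
  let s : SGset B W M cs G → fixedSubgroup W G := fun t => ⟨t.1, (ha t).fixed hact⟩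
  have hcl : ∀ t r (y : fixedSubgroup W G), y ∈ Subgroup.closure {s t, s r} →
      (y : W) ∈ CoxFix.Par cs (MulAction.orbit G (a t) ∪ MulAction.orbit G (a r)) := by
    intro t r y hy
    apply CoxFix.mem_par_union (ha t) (ha r)
    have h := Subgroup.mem_map_of_mem (fixedSubgroup W G).subtype hy
    rw [MonoidHom.map_closure, Set.image_pair] at h
    exact h
  obtain ⟨M', cs', h⟩ := CoxFix.abstract_coxeter s (fun w => cs.length (w : W))
    (fun t r h => Subtype.ext (congrArg (fun z : fixedSubgroup W G => (z : W)) h))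
    (fun w => by simp)
    (fun t => Subtype.ext (ha t).mul_self)
    (fun t h => (ha t).ne_one (congrArg Subtype.val h))
    (by
      apply Subgroup.map_injective (fixedSubgroup W G).subtype_injective
      rw [MonoidHom.map_closure, ← MonoidHom.range_eq_map, Subgroup.range_subtype,
        ← Set.range_comp]
      refine Eq.trans (congrArg Subgroup.closure ?_) (CoxFix.closure_SG (cs := cs) hact)
      exact Subtype.range_coe)
    (by
      intro w t r ht hr y hy
      have ht' := ((ha t).lt_iff hact w.2).not.1 ht
      have hr' := ((ha r).lt_iff hact w.2).not.1 hr
      refine CoxFix.par_add cs ?_ (hcl t r y hy)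
      rintro j (hj | hj)
      · exact (CoxFix.descent_orbit cs hact w.2 hj).not.2 ht'
      · exact (CoxFix.descent_orbit cs hact w.2 hj).not.2 hr')
    (by
      intro w t r ht hr y hy
      have ht' := ((ha t).lt_iff hact w.2).1 ht
      have hr' := ((ha r).lt_iff hact w.2).1 hr
      refine CoxFix.par_sub cs ?_ (hcl t r y hy)
      rintro j (hj | hj)
      · exact (CoxFix.descent_orbit cs hact w.2 hj).2 ht'
      · exact (CoxFix.descent_orbit cs hact w.2 hj).2 hr')
  refine ⟨SGset B W M cs G, M', cs', ?_⟩
  simp only [h]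
  exact Subtype.range_coe
end
end

section
/- Let $(W,S)$ be a Coxeter system and $G$ a group of automorphisms of $W$ stabilizing $S$, so that $(W^G, S_G)$ is a Coxeter system with length function $\ell_G$. Then for all $x, y \in W^G$: $\ell(xy) = \ell(x) + \ell(y)$ if and only if $\ell_G(xy) = \ell_G(x) + \ell_G(y)$, where $\ell$ is the length function of $(W,S)$. -/
noncomputable section

/-!
STATEMENT 5: For the Coxeter system `(W^G, S_G)` of fixed points, with length function `ℓ_G`,
and `x, y ∈ W^G`:  `ℓ(xy) = ℓ(x) + ℓ(y)` iff `ℓ_G(xy) = ℓ_G(x) + ℓ_G(y)`.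
-/


namespace CoxAux
open CoxeterSystem List

section
variable {B W : Type} [Group W] {M : CoxeterMatrix B} (cs : CoxeterSystem M W)

theorem lis_append (a b : List B) : cs.leftInvSeq (a ++ b) =
    cs.leftInvSeq a ++ (cs.leftInvSeq b).map (MulAut.conj (cs.wordProd a)) := by
  induction a with
  | nil => simp
  | cons i a ih =>
    simp [leftInvSeq, ih, wordProd_cons]

open scoped Classical in
/-- generator action on `W × ZMod 2` -/
def genAct (i : B) : Function.End (W × ZMod 2) := fun p =>
  (cs.simple i * p.1 * cs.simple i, p.2 + if p.1 = cs.simple i then 1 else 0)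

open scoped Classical in
theorem genAct_prod (ω : List B) (p : W × ZMod 2) : (ω.map (genAct cs)).prod p =
    (cs.wordProd ω * p.1 * (cs.wordProd ω)⁻¹, p.2 + ((cs.rightInvSeq ω).count p.1 : ZMod 2)) := by
  induction ω with
  | nil =>
    simp
    rfl
  | cons i ω ih =>
    rw [List.map_cons, List.prod_cons]
    change genAct cs i ((ω.map (genAct cs)).prod p) = _
    rw [ih]
    have h : (cs.wordProd ω * p.1 * (cs.wordProd ω)⁻¹ = cs.simple i) ↔
      ((cs.wordProd ω)⁻¹ * cs.simple i * cs.wordProd ω = p.1) := by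
      constructor
      · intro h; rw [← h]; group
      · intro h; rw [← h]; group
    simp only [genAct, rightInvSeq, wordProd_cons, List.count_cons, h, beq_iff_eq]
    refine Prod.ext ?_ ?_
    · simp [mul_assoc]
    · simp only
      split_ifs <;> simp [add_assoc]

theorem alt_reverse (i j : B) (m : ℕ) :
    (alternatingWord i j (2 * m)).reverse = alternatingWord j i (2 * m) := by
  apply List.ext_getElem
  · simp
  · intro k h1 h2
    simp at h1 h2
    rw [List.getElem_reverse, getElem_alternatingWord _ _ _ _ (by simp; omega),
      getElem_alternatingWord _ _ _ _ (by omega)]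
    simp only [length_alternatingWord]
    rcases Nat.even_or_odd k with hk | hk
    · rw [if_neg, if_pos]
      · exact (even_two_mul m).add hk
      · rw [Nat.not_even_iff_odd]
        obtain ⟨c, hc⟩ := hk
        exact ⟨2 * m - 1 - c, by omega⟩
    · rw [if_pos, if_neg]
      · rw [Nat.not_even_iff_odd]; exact (even_two_mul m).add_odd hk
      · obtain ⟨c, hc⟩ := hk
        exact ⟨2 * m - 1 - c, by omega⟩

theorem genAct_pow (i j : B) (m : ℕ) : (genAct cs i * genAct cs j) ^ m =
    ((alternatingWord i j (2 * m)).map (genAct cs)).prod := by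
  induction m with
  | zero => simp [alternatingWord]
  | succ m ih =>
    rw [pow_succ, ih, show 2 * (m + 1) = 2 * m + 1 + 1 by ring, alternatingWord_succ,
      alternatingWord_succ]
    simp [mul_assoc]

open scoped Classical in
theorem count_alt (i j : B) (t : W) :
    (((cs.leftInvSeq (alternatingWord i j (2 * M i j))).count t : ℕ) : ZMod 2) = 0 := by
  set m := M i j with hm
  set L := cs.leftInvSeq (alternatingWord i j (2 * m)) with hL
  have hlen : L.length = 2 * m := by simp [hL]
  have hdt : L.drop m = L.take m := by
    apply List.ext_getElem
    · simp [hlen]; omega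
    · intro k h1 h2
      simp [hlen] at h1 h2
      rw [List.getElem_drop, List.getElem_take]
      simp only [hL]
      rw [cs.getElem_leftInvSeq_alternatingWord i j m (m + k) (by omega),
        cs.getElem_leftInvSeq_alternatingWord i j m k (by omega),
        prod_alternatingWord_eq_mul_pow, prod_alternatingWord_eq_mul_pow]
      have e1 : ¬ Even (2 * (m + k) + 1) := by
        rw [Nat.not_even_iff_odd]; exact odd_two_mul_add_one _
      have e2 : ¬ Even (2 * k + 1) := by
        rw [Nat.not_even_iff_odd]; exact odd_two_mul_add_one _
      rw [if_neg e1, if_neg e2, show (2 * (m + k) + 1) / 2 = m + k by omega,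
        show (2 * k + 1) / 2 = k by omega, pow_add, hm, cs.simple_mul_simple_pow', one_mul]
  rw [← List.take_append_drop m L, hdt, List.count_append, Nat.cast_add]
  exact CharTwo.add_self_eq_zero _

theorem genAct_liftable : M.IsLiftable (genAct cs) := by
  classical
  intro i j
  rw [genAct_pow]
  funext p
  rw [genAct_prod]
  have h1 : cs.wordProd (alternatingWord i j (2 * M i j)) = 1 := by
    rw [prod_alternatingWord_eq_mul_pow]
    simp
  have h2 : (cs.rightInvSeq (alternatingWord i j (2 * M i j))).count p.1 =
      (cs.leftInvSeq (alternatingWord j i (2 * M j i))).count p.1 := by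
    rw [M.symmetric j i, ← alt_reverse i j, leftInvSeq_reverse, List.count_reverse]
  rw [h1, h2, count_alt]
  simp
  rfl

open scoped Classical in
theorem count_eq (ω ω' : List B) (h : cs.wordProd ω = cs.wordProd ω') (t : W) :
    ((cs.rightInvSeq ω).count t : ZMod 2) = ((cs.rightInvSeq ω').count t : ZMod 2) := by
  have key : ∀ ω : List B, cs.lift ⟨genAct cs, genAct_liftable cs⟩ (cs.wordProd ω) =
      (ω.map (genAct cs)).prod := by
    intro ω
    rw [wordProd, map_list_prod, List.map_map]
    congr 2
    funext i
    exact cs.lift_apply_simple _ i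
  have h1 := congrFun (key ω) (t, 0)
  rw [h, key ω', genAct_prod, genAct_prod] at h1
  simpa using (congrArg Prod.snd h1).symm

open scoped Classical in
theorem count_eq' (ω ω' : List B) (h : cs.wordProd ω = cs.wordProd ω') (t : W) :
    ((cs.leftInvSeq ω).count t : ZMod 2) = ((cs.leftInvSeq ω').count t : ZMod 2) := by
  have := count_eq cs ω.reverse ω'.reverse (by simp [h]) t
  simpa [rightInvSeq_reverse] using this

open scoped Classical in
theorem count_append (a b : List B) (t : W) : (cs.leftInvSeq (a ++ b)).count t =
    (cs.leftInvSeq a).count t +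
      (cs.leftInvSeq b).count ((cs.wordProd a)⁻¹ * t * cs.wordProd a) := by
  rw [lis_append, List.count_append]
  congr 1
  have : t = MulAut.conj (cs.wordProd a) ((cs.wordProd a)⁻¹ * t * cs.wordProd a) := by
    simp [mul_assoc]
  conv_lhs => rw [this]
  exact List.count_map_of_injective _ _ (MulAut.conj (cs.wordProd a)).injective _

/-- strong exchange -/
theorem mem_lis {ω : List B} {t : W} (h : cs.IsLeftInversion (cs.wordProd ω) t) :
    t ∈ cs.leftInvSeq ω := by
  classical
  obtain ⟨⟨u, i, ht⟩, hlt⟩ := h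
  obtain ⟨υ, rfl⟩ := cs.wordProd_surjective u
  by_contra hn
  have h0 : (cs.leftInvSeq ω).count t = 0 := List.count_eq_zero.mpr hn
  -- word for t
  set τ := υ ++ ([i] ++ υ.reverse) with hτ
  have hτt : cs.wordProd τ = t := by
    rw [hτ, ht]; simp [wordProd_append, wordProd_cons, mul_assoc]
  have hself : ((cs.leftInvSeq τ).count t : ZMod 2) = 1 := by
    have e0 := count_eq' cs (υ ++ υ.reverse) [] (by simp [wordProd_append]) t
    rw [count_append] at e0
    rw [hτ, count_append, count_append]
    have e1 : (cs.wordProd υ)⁻¹ * t * cs.wordProd υ = cs.simple i := by rw [ht]; group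
    rw [e1] at e0 ⊢
    simp at e0 ⊢
    rw [add_left_comm, e0, add_zero]
  obtain ⟨ρ, hρ, hρe⟩ := cs.exists_isReduced (t * cs.wordProd ω)
  have h1 : ((cs.leftInvSeq ρ).count t : ZMod 2) = 1 := by
    rw [count_eq' cs ρ (τ ++ ω) (by rw [wordProd_append, hτt, hρe]), count_append, hτt]
    rw [show t⁻¹ * t * t = t by group, h0]
    simp [hself]
  have hmem : t ∈ cs.leftInvSeq ρ := by
    by_contra hc
    rw [List.count_eq_zero.mpr hc] at h1
    simp at h1
  have := (cs.isLeftInversion_of_mem_leftInvSeq hρ hmem).2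
  have htt : t * t = 1 := by
    rw [ht]; simp [mul_assoc]
  rw [← hρe, ← mul_assoc, htt, one_mul] at this
  omega

theorem exists_sublist (ω : List B) : ∃ ρ : List B, ρ.Sublist ω ∧ cs.IsReduced ρ ∧
    cs.wordProd ρ = cs.wordProd ω := by
  induction ω with
  | nil => exact ⟨[], by simp, by simp [CoxeterSystem.IsReduced], rfl⟩
  | cons i ω ih =>
    obtain ⟨ρ, h1, h2, h3⟩ := ih
    by_cases hd : cs.IsLeftDescent (cs.wordProd ρ) i
    · have hm := mem_lis cs ((cs.isLeftInversion_simple_iff_isLeftDescent _ i).mpr hd)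
      obtain ⟨j, hj, hj'⟩ := List.mem_iff_getElem.mp hm
      have e := cs.getD_leftInvSeq_mul_wordProd ρ j
      rw [List.getD_eq_getElem _ _ hj, hj'] at e
      refine ⟨ρ.eraseIdx j, ?_, ?_, ?_⟩
      · exact ((List.eraseIdx_sublist _ _).trans h1).trans (List.sublist_cons_self _ _)
      · rw [isLeftDescent_iff] at hd
        rw [CoxeterSystem.IsReduced, ← e, List.length_eraseIdx]
        rw [h2.eq] at hd
        simp at hj
        rw [if_pos hj]; omega
      · rw [← e, h3, wordProd_cons]
    · refine ⟨i :: ρ, h1.cons_cons i, ?_, ?_⟩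
      · rw [not_isLeftDescent_iff] at hd
        rw [CoxeterSystem.IsReduced, wordProd_cons, hd, h2.eq]; simp
      · rw [wordProd_cons, h3, wordProd_cons]

/-- parabolic -/
abbrev par (J : Set B) : Subgroup W := Subgroup.closure (cs.simple '' J)

theorem simple_mem_par {J : Set B} {i : B} (h : i ∈ J) : cs.simple i ∈ par cs J :=
  Subgroup.subset_closure ⟨i, h, rfl⟩

theorem wordProd_mem_par {J : Set B} {ω : List B} (h : ∀ i ∈ ω, i ∈ J) :
    cs.wordProd ω ∈ par cs J := by
  induction ω with
  | nil => simp
  | cons i ω ih =>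
    rw [wordProd_cons]
    exact mul_mem (simple_mem_par cs (h i (by simp))) (ih fun k hk => h k (by simp [hk]))

theorem lis_mem_par {J : Set B} {ω : List B} (h : ∀ i ∈ ω, i ∈ J) {t : W}
    (ht : t ∈ cs.leftInvSeq ω) : t ∈ par cs J := by
  obtain ⟨j, hj, rfl⟩ := List.mem_iff_getElem.mp ht
  have hj' : j < ω.length := by simpa using hj
  rw [cs.getElem_leftInvSeq ω j hj']
  have : cs.wordProd (ω.take j) ∈ par cs J :=
    wordProd_mem_par cs fun i hi => h i (List.mem_of_mem_take hi)
  exact mul_mem (mul_mem this (simple_mem_par cs (h _ (List.getElem_mem hj')))) (inv_mem this)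

theorem exists_reduced_par {J : Set B} {v : W} (hv : v ∈ par cs J) :
    ∃ ω : List B, (∀ i ∈ ω, i ∈ J) ∧ cs.IsReduced ω ∧ cs.wordProd ω = v := by
  have : ∃ ω : List B, (∀ i ∈ ω, i ∈ J) ∧ cs.wordProd ω = v := by
    induction hv using Subgroup.closure_induction with
    | mem x hx =>
      obtain ⟨i, hi, rfl⟩ := hx
      exact ⟨[i], by simpa using hi, by simp⟩
    | one => exact ⟨[], by simp, by simp⟩
    | mul x y _ _ hx hy =>
      obtain ⟨a, ha, rfl⟩ := hx
      obtain ⟨b, hb, rfl⟩ := hy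
      refine ⟨a ++ b, ?_, by rw [wordProd_append]⟩
      intro i hi
      rcases List.mem_append.mp hi with h | h
      exacts [ha i h, hb i h]
    | inv x _ hx =>
      obtain ⟨a, ha, rfl⟩ := hx
      exact ⟨a.reverse, by simpa using ha, by simp⟩
  obtain ⟨ω, h1, rfl⟩ := this
  obtain ⟨ρ, h2, h3, h4⟩ := exists_sublist cs ω
  exact ⟨ρ, fun i hi => h1 i (h2.subset hi), h3, h4⟩

theorem exists_desc {J : Set B} {v : W} (hv : v ∈ par cs J) (h1 : v ≠ 1) :
    ∃ i ∈ J, cs.IsLeftDescent v i := by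
  obtain ⟨ω, h, hr, rfl⟩ := exists_reduced_par cs hv
  cases ω with
  | nil => simp at h1
  | cons i ω =>
    refine ⟨i, h i (by simp), ?_⟩
    have := cs.length_wordProd_le ω
    rw [IsLeftDescent, hr.eq, wordProd_cons]
    simp
    omega

theorem length_mul_of_min {J : Set B} {w : W}
    (hmin : ∀ v ∈ par cs J, cs.length w ≤ cs.length (v * w)) {v : W} (hv : v ∈ par cs J) :
    cs.length (v * w) = cs.length v + cs.length w := by
  obtain ⟨ω, h, hr, rfl⟩ := exists_reduced_par cs hv
  clear hv
  induction ω with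
  | nil => simp
  | cons i ω ih =>
    have hr' : cs.IsReduced ω := by simpa using hr.drop 1
    have hJ : ∀ k ∈ ω, k ∈ J := fun k hk => h k (by simp [hk])
    have ih := ih hJ hr'
    rw [hr.eq, wordProd_cons, mul_assoc]
    suffices hd : ¬ cs.IsLeftDescent (cs.wordProd ω * w) i by
      rw [not_isLeftDescent_iff] at hd
      rw [hd, ih, hr'.eq]; simp; omega
    intro hd
    obtain ⟨ρ, hρ, rfl⟩ := cs.exists_isReduced w
    rw [← wordProd_append] at hd
    have hm := mem_lis cs ((cs.isLeftInversion_simple_iff_isLeftDescent _ i).mpr hd)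
    rw [lis_append, List.mem_append] at hm
    rcases hm with hm | hm
    · have := (cs.isLeftInversion_of_mem_leftInvSeq hr' hm).2
      rw [← wordProd_cons, hr.eq, hr'.eq] at this
      simp at this
    · obtain ⟨t, ht, hte⟩ := List.mem_map.mp hm
      have h1 := (cs.isLeftInversion_of_mem_leftInvSeq hρ ht).2
      have h2 : t ∈ par cs J := by
        have : t = (cs.wordProd ω)⁻¹ * cs.simple i * cs.wordProd ω := by
          rw [← hte]; simp [mul_assoc]
        rw [this]
        have hw := wordProd_mem_par cs hJ
        exact mul_mem (mul_mem (inv_mem hw) (simple_mem_par cs (h i (by simp)))) hw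
      have := hmin t h2
      omega

theorem length_mul_of_nodesc {J : Set B} {w : W} (hw : ∀ i ∈ J, ¬ cs.IsLeftDescent w i)
    {v : W} (hv : v ∈ par cs J) : cs.length (v * w) = cs.length v + cs.length w := by
  obtain ⟨u, hu, humin⟩ : ∃ u ∈ par cs J, ∀ v ∈ par cs J,
      cs.length (u * w) ≤ cs.length (v * w) := by
    obtain ⟨u, hu, h⟩ := exists_minimalFor_of_wellFoundedLT (fun v => v ∈ par cs J)
      (fun v => cs.length (v * w)) ⟨1, one_mem _⟩
    refine ⟨u, hu, fun v hv => ?_⟩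
    rcases le_total (cs.length (u * w)) (cs.length (v * w)) with h' | h'
    · exact h'
    · exact h hv h'
  have hmin : ∀ v ∈ par cs J, cs.length (u * w) ≤ cs.length (v * (u * w)) := by
    intro v hv
    rw [← mul_assoc]
    exact humin _ (mul_mem hv hu)
  have hu1 : u = 1 := by
    by_contra hne
    obtain ⟨i, hi, hd⟩ := exists_desc cs (inv_mem hu) (by simpa using hne)
    apply hw i hi
    have e1 := length_mul_of_min cs hmin (inv_mem hu)
    rw [inv_mul_cancel_left] at e1
    have e2 := length_mul_of_min cs hmin (mul_mem (simple_mem_par cs hi) (inv_mem hu))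
    rw [mul_assoc, inv_mul_cancel_left] at e2
    rw [IsLeftDescent] at hd ⊢
    omega
  rw [hu1, one_mul] at hmin
  exact length_mul_of_min cs hmin hv

theorem length_mul_longest {J : Set B} {w : W} (hw : w ∈ par cs J)
    (hmax : ∀ u ∈ par cs J, cs.length u ≤ cs.length w) {u : W} (hu : u ∈ par cs J) :
    cs.length (u * w) + cs.length u = cs.length w := by
  obtain ⟨ω, h, hr, rfl⟩ := exists_reduced_par cs hu
  clear hu
  induction ω with
  | nil => simp
  | cons i ω ih =>
    have hr' : cs.IsReduced ω := by simpa using hr.drop 1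
    have hJ : ∀ k ∈ ω, k ∈ J := fun k hk => h k (by simp [hk])
    have ih := ih hJ hr'
    rw [hr.eq, wordProd_cons, mul_assoc]
    suffices hd : cs.IsLeftDescent (cs.wordProd ω * w) i by
      rw [isLeftDescent_iff] at hd
      rw [hr'.eq] at ih
      simp; omega
    obtain ⟨ρ, hρ, hρe⟩ := cs.exists_isReduced (cs.wordProd ω * w)
    have hwe : w = cs.wordProd (ω.reverse ++ ρ) := by
      rw [wordProd_append, ← hρe]; simp
    set t := (cs.wordProd ω)⁻¹ * cs.simple i * cs.wordProd ω with ht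
    have htr : cs.IsReflection t := ⟨(cs.wordProd ω)⁻¹, i, by simp [ht]⟩
    have htJ : t ∈ par cs J := by
      have hw := wordProd_mem_par cs hJ
      exact mul_mem (mul_mem (inv_mem hw) (simple_mem_par cs (h i (by simp)))) hw
    have hti : cs.IsLeftInversion w t :=
      ⟨htr, lt_of_le_of_ne (hmax _ (mul_mem htJ hw)) (htr.length_mul_right_ne w)⟩
    rw [hwe] at hti
    have hm := mem_lis cs hti
    rw [lis_append, List.mem_append] at hm
    rcases hm with hm | hm
    · exfalso
      have := (cs.isLeftInversion_of_mem_leftInvSeq hr'.reverse hm).2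
      have e : t * cs.wordProd ω.reverse = (cs.wordProd (i :: ω))⁻¹ := by
        rw [ht, wordProd_reverse, wordProd_cons]; simp
      rw [e, wordProd_reverse, length_inv, length_inv, hr.eq, hr'.eq] at this
      simp at this
    · obtain ⟨r, hrm, hre⟩ := List.mem_map.mp hm
      have : r = cs.simple i := by
        have : r = cs.wordProd ω * t * (cs.wordProd ω)⁻¹ := by
          rw [← hre]; simp [mul_assoc]
        rw [this, ht]; group
      rw [this] at hrm
      have := cs.isLeftInversion_of_mem_leftInvSeq hρ hrm
      rw [← hρe] at this
      exact (cs.isLeftInversion_simple_iff_isLeftDescent _ i).mp this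

theorem eq_longest {J : Set B} {w : W} (hw : w ∈ par cs J)
    (hmax : ∀ u ∈ par cs J, cs.length u ≤ cs.length w) {v : W} (hv : v ∈ par cs J)
    (hd : ∀ i ∈ J, cs.IsLeftDescent v i) : v = w := by
  by_contra hne
  obtain ⟨i, hi, hdi⟩ := exists_desc cs (v := v * w⁻¹) (mul_mem hv (inv_mem hw))
    (by rwa [Ne, mul_inv_eq_one])
  have e1 := length_mul_longest cs hw hmax (mul_mem hv (inv_mem hw))
  have e2 := length_mul_longest cs hw hmax
    (mul_mem (simple_mem_par cs hi) (mul_mem hv (inv_mem hw)))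
  have := hd i hi
  rw [IsLeftDescent] at this hdi
  simp only [mul_assoc, inv_mul_cancel, mul_one] at e1 e2 hdi
  omega

end

section
variable {B W : Type} [Group W] {M : CoxeterMatrix B} (cs : CoxeterSystem M W)
  {G : Type} [Group G] [MulDistribMulAction G W] [MulAction G B]

theorem smul_wordProd
    (hact : ∀ (σ : G) (i : B), σ • cs.simple i = cs.simple (σ • i))
    (σ : G) (ω : List B) :
    σ • cs.wordProd ω = cs.wordProd (ω.map (σ • ·)) := by
  induction ω with
  | nil => simp
  | cons i ω ih => simp [wordProd_cons, smul_mul', ih, hact]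

theorem length_smul
    (hact : ∀ (σ : G) (i : B), σ • cs.simple i = cs.simple (σ • i))
    (σ : G) (w : W) : cs.length (σ • w) = cs.length w := by
  have key : ∀ (σ : G) (w : W), cs.length (σ • w) ≤ cs.length w := by
    intro σ w
    obtain ⟨ω, h, rfl⟩ := cs.exists_isReduced w
    rw [smul_wordProd cs hact, h.eq]
    simpa using cs.length_wordProd_le (ω.map (σ • ·))
  apply le_antisymm (key σ w)
  simpa using key σ⁻¹ (σ • w)

theorem desc_smul
    (hact : ∀ (σ : G) (i : B), σ • cs.simple i = cs.simple (σ • i))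
    {w : W} (hw : ∀ σ : G, σ • w = w) {i : B} (h : cs.IsLeftDescent w i) (σ : G) :
    cs.IsLeftDescent w (σ • i) := by
  rw [IsLeftDescent] at h ⊢
  rw [← hact]
  nth_rw 1 [← hw σ]
  rwa [← smul_mul', length_smul cs hact]

theorem smul_par
    (hact : ∀ (σ : G) (i : B), σ • cs.simple i = cs.simple (σ • i))
    (σ : G) (i : B) {w : W} (hw : w ∈ parab B W M cs G i) :
    σ • w ∈ parab B W M cs G i := by
  unfold parab at *
  induction hw using Subgroup.closure_induction with
  | mem x hx =>
    obtain ⟨k, hk, rfl⟩ := hx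
    rw [hact]
    apply Subgroup.subset_closure
    refine ⟨_, ?_, rfl⟩
    obtain ⟨τ, rfl⟩ := hk
    exact ⟨σ * τ, mul_smul _ _ _⟩
  | one => rw [smul_one]; exact one_mem _
  | mul x y _ _ hx hy => rw [smul_mul']; exact mul_mem hx hy
  | inv x _ hx => rw [smul_inv']; exact inv_mem hx

theorem fixed_eq_longest
    (hact : ∀ (σ : G) (i : B), σ • cs.simple i = cs.simple (σ • i))
    {i : B} {w : W} (hw : w ∈ parab B W M cs G i)
    (hmax : ∀ u ∈ parab B W M cs G i, cs.length u ≤ cs.length w)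
    {v : W} (hv : v ∈ parab B W M cs G i) (hfix : ∀ σ : G, σ • v = v) (h1 : v ≠ 1) : v = w := by
  apply eq_longest cs hw hmax hv
  obtain ⟨k, ⟨τ, rfl⟩, hk⟩ := exists_desc cs hv h1
  rintro _ ⟨σ, rfl⟩
  have := desc_smul cs hact hfix hk (σ * τ⁻¹)
  simpa [mul_smul] using this

variable {ι : Type} {M' : CoxeterMatrix ι} (cs' : CoxeterSystem M' (fixedSubgroup W G))

theorem spec
    (hS : Set.range (fun i => (cs'.simple i : W)) = SGset B W M cs G)
    (a : ι) : ∃ i : B, (cs'.simple a : W) ∈ parab B W M cs G i ∧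
    ∀ u ∈ parab B W M cs G i, cs.length u ≤ cs.length (cs'.simple a : W) := by
  have : (cs'.simple a : W) ∈ SGset B W M cs G := by rw [← hS]; exact ⟨a, rfl⟩
  obtain ⟨i, h1, _, h2⟩ := this
  exact ⟨i, h1, h2⟩

theorem exists_word (f : ι → B) (hf : ∀ a, (cs'.simple a : W) ∈ parab B W M cs G (f a))
    (L : List ι) : ∃ ρ : List B, cs.wordProd ρ = (cs'.wordProd L : W) ∧
      ∀ t ∈ cs.leftInvSeq ρ, ∃ L₁ j L₂, L = L₁ ++ j :: L₂ ∧
        (cs'.wordProd L₁ : W)⁻¹ * t * (cs'.wordProd L₁ : W) ∈ parab B W M cs G (f j) := by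
  induction L with
  | nil => exact ⟨[], by simp, by simp⟩
  | cons a L ih =>
    obtain ⟨ρ, h1, h2⟩ := ih
    obtain ⟨ω, h3, -, h5⟩ := exists_reduced_par cs (hf a)
    refine ⟨ω ++ ρ, by rw [wordProd_append, h1, h5, wordProd_cons]; rfl, ?_⟩
    intro t ht
    rw [lis_append, List.mem_append] at ht
    rcases ht with ht | ht
    · exact ⟨[], a, L, rfl, by simpa [parab] using lis_mem_par cs h3 ht⟩
    · obtain ⟨r, hr, rfl⟩ := List.mem_map.mp ht
      obtain ⟨L₁, j, L₂, rfl, h⟩ := h2 r hr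
      refine ⟨a :: L₁, j, L₂, rfl, ?_⟩
      rw [wordProd_cons, h5]
      simpa [mul_assoc] using h

theorem exchange
    (hact : ∀ (σ : G) (i : B), σ • cs.simple i = cs.simple (σ • i))
    (f : ι → B) (hf : ∀ a, (cs'.simple a : W) ∈ parab B W M cs G (f a))
    (hmax : ∀ a, ∀ u ∈ parab B W M cs G (f a), cs.length u ≤ cs.length (cs'.simple a : W))
    (a : ι) (L : List ι) (i : B) (hi : i ∈ MulAction.orbit G (f a))
    (hd : cs.IsLeftDescent (cs'.wordProd L : W) i) :
    cs'.length (cs'.simple a * cs'.wordProd L) < L.length := by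
  obtain ⟨ρ, h1, h2⟩ := exists_word cs cs' f hf L
  rw [← h1] at hd
  obtain ⟨L₁, j, L₂, rfl, h⟩ :=
    h2 _ (mem_lis cs ((cs.isLeftInversion_simple_iff_isLeftDescent _ i).mpr hd))
  set u := cs'.wordProd L₁ with hu
  have hsub : ∀ v ∈ parab B W M cs G (f a), (u : W)⁻¹ * v * (u : W) ∈ parab B W M cs G (f j) := by
    intro v hv
    have : parab B W M cs G (f a) ≤
        (parab B W M cs G (f j)).comap (MulAut.conj (u : W)⁻¹).toMonoidHom := by
      unfold parab
      rw [Subgroup.closure_le]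
      rintro _ ⟨k, ⟨τ, rfl⟩, rfl⟩
      obtain ⟨σ, rfl⟩ := hi
      have := smul_par cs hact (τ * σ⁻¹) (f j) h
      rw [smul_mul', smul_mul', smul_inv', u.2, hact] at this
      simpa [mul_smul, parab] using this
    simpa using this hv
  have hfix : u⁻¹ * cs'.simple a * u = cs'.simple j := by
    apply Subtype.ext
    apply fixed_eq_longest cs hact (hf j) (hmax j) (hsub _ (hf a))
    · exact (u⁻¹ * cs'.simple a * u).2
    · intro he
      have he' : u⁻¹ * cs'.simple a * u = 1 := Subtype.ext he
      have : cs'.simple a = 1 := by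
        have : cs'.simple a = u * (u⁻¹ * cs'.simple a * u) * u⁻¹ := by group
        rw [this, he']; group
      have h3 := cs'.length_simple a
      rw [this] at h3
      simp at h3
  have : cs'.simple a * cs'.wordProd (L₁ ++ j :: L₂) = cs'.wordProd (L₁ ++ L₂) := by
    rw [wordProd_append, wordProd_append, wordProd_cons, ← hu]
    have : cs'.simple a = u * cs'.simple j * u⁻¹ := by rw [← hfix]; group
    rw [this]
    simp [mul_assoc]
  rw [this]
  have := cs'.length_wordProd_le (L₁ ++ L₂)
  simp at this ⊢
  omega

theorem additive
    (hact : ∀ (σ : G) (i : B), σ • cs.simple i = cs.simple (σ • i))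
    (hS : Set.range (fun i => (cs'.simple i : W)) = SGset B W M cs G)
    (L : List ι) (hL : cs'.IsReduced L) :
    cs.length (cs'.wordProd L : W) = (L.map fun a => cs.length (cs'.simple a : W)).sum := by
  choose f hf hmax using spec cs cs' hS
  induction L with
  | nil => simp
  | cons a L ih =>
    have hr' : cs'.IsReduced L := by simpa using hL.drop 1
    rw [List.map_cons, List.sum_cons, ← ih hr', wordProd_cons]
    apply length_mul_of_nodesc cs (J := MulAction.orbit G (f a)) _ (hf a)
    intro i hi hd
    have := exchange cs cs' hact f hf hmax a L i hi hd
    rw [← wordProd_cons, hL.eq] at this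
    simp at this

theorem length_le_sum (L : List ι) :
    cs.length (cs'.wordProd L : W) ≤ (L.map fun a => cs.length (cs'.simple a : W)).sum := by
  induction L with
  | nil => simp
  | cons a L ih =>
    rw [List.map_cons, List.sum_cons, wordProd_cons]
    have := cs.length_mul_le (cs'.simple a : W) (cs'.wordProd L : W)
    change cs.length ((cs'.simple a : W) * (cs'.wordProd L : W)) ≤ _
    omega

theorem reduced_of_additive
    (hact : ∀ (σ : G) (i : B), σ • cs.simple i = cs.simple (σ • i))
    (hS : Set.range (fun i => (cs'.simple i : W)) = SGset B W M cs G)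
    (L : List ι)
    (h : cs.length (cs'.wordProd L : W) = (L.map fun a => cs.length (cs'.simple a : W)).sum) :
    cs'.IsReduced L := by
  induction L with
  | nil => simp [CoxeterSystem.IsReduced]
  | cons a L ih =>
    have h1 := length_le_sum cs cs' L
    have h2 := cs.length_mul_le (cs'.simple a : W) (cs'.wordProd L : W)
    have h3 : ((cs'.wordProd (a :: L) : fixedSubgroup W G) : W) =
      (cs'.simple a : W) * (cs'.wordProd L : W) := by rw [wordProd_cons]; rfl
    rw [List.map_cons, List.sum_cons, h3] at h
    have hL := ih (by omega)
    rcases cs'.length_simple_mul (cs'.wordProd L) a with h4 | h4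
    · rw [CoxeterSystem.IsReduced, wordProd_cons, h4, hL.eq]; simp
    · exfalso
      obtain ⟨K, hK, hKe⟩ := cs'.exists_isReduced (cs'.simple a * cs'.wordProd L)
      have e : cs'.wordProd (a :: K) = cs'.wordProd L := by
        rw [wordProd_cons, ← hKe]; simp
      have hr : cs'.IsReduced (a :: K) := by
        rw [CoxeterSystem.IsReduced, e, ← h4, hKe, hK.eq]; simp
      have a1 := additive cs cs' hact hS _ hr
      have a2 := additive cs cs' hact hS _ hK
      rw [e, List.map_cons, List.sum_cons, ← a2, ← hKe] at a1
      have hpos : cs.length (cs'.simple a : W) ≠ 0 := by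
        intro h0
        rw [CoxeterSystem.length_eq_zero_iff] at h0
        have h0' : cs'.simple a = 1 := Subtype.ext h0
        have h3 := cs'.length_simple a
        rw [h0'] at h3
        simp at h3
      have h5 : ((cs'.simple a * cs'.wordProd L : fixedSubgroup W G) : W) =
        (cs'.simple a : W) * (cs'.wordProd L : W) := rfl
      rw [h5] at a1
      omega

end
end CoxAux

theorem statement5 (B W : Type) [Group W] (M : CoxeterMatrix B) (cs : CoxeterSystem M W)
    (G : Type) [Group G] [MulDistribMulAction G W] [MulAction G B]
    (hact : ∀ (σ : G) (i : B), σ • cs.simple i = cs.simple (σ • i))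
    (ι : Type) (M' : CoxeterMatrix ι) (cs' : CoxeterSystem M' (fixedSubgroup W G))
    (hS : Set.range (fun i => (cs'.simple i : W)) = SGset B W M cs G)
    (x y : fixedSubgroup W G) :
    cs.length ((x : W) * y) = cs.length (x : W) + cs.length (y : W) ↔
      cs'.length (x * y) = cs'.length x + cs'.length y := by
  obtain ⟨K, hK, rfl⟩ := cs'.exists_isReduced x
  obtain ⟨L, hL, rfl⟩ := cs'.exists_isReduced y
  have e : ((cs'.wordProd K : W) * (cs'.wordProd L : W)) = (cs'.wordProd (K ++ L) : W) := by
    rw [CoxeterSystem.wordProd_append]; rfl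
  rw [e, ← CoxeterSystem.wordProd_append, hK.eq, hL.eq, CoxAux.additive cs cs' hact hS K hK,
    CoxAux.additive cs cs' hact hS L hL, ← List.sum_append, ← List.map_append,
    ← List.length_append]
  exact ⟨CoxAux.reduced_of_additive cs cs' hact hS _, CoxAux.additive cs cs' hact hS _⟩
end
end
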